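/- Let S be a commutative ring, let C and C' be non-negatively graded chain complexes of S-modules, and let f : C → C' be a quasi-isomorphism (i.e. f induces an isomorphism on homology in every degree). Let D be a non-negatively graded chain complex of S-modules such that every term D_n is a projective S-module and D_n = 0 for all n greater than some bound N. Then the induced map f ⊗ id_D from the total complex of C ⊗ D to the total complex of C' ⊗ D is a quasi-isomorphism. -/

import Mathlib

open CategoryTheory MonoidalCategory Limits

/- The monoidal (tensor product) structure on `ℕ`-indexed chain complexes of `S`-modules:
we provide the instances needed for Mathlib's monoidal structure on homological complexes. -/

noncomputable instance (S : Type) [CommRing S] : (curriedTensor (ModuleCat S)).Additive where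
  map_add := by intros; ext; simp [curriedTensor, MonoidalPreadditive.add_whiskerRight]

instance (S : Type) [CommRing S] (X : ModuleCat S) :
    ((curriedTensor (ModuleCat S)).obj X).Additive where
  map_add := by intros; simp [curriedTensor, MonoidalPreadditive.whiskerLeft_add]

noncomputable instance (S : Type) [CommRing S] (X : ModuleCat S) :
    PreservesColimits ((curriedTensor (ModuleCat S)).obj X) :=
  inferInstanceAs (PreservesColimits (tensorLeft X))

noncomputable instance (S : Type) [CommRing S] (X : ModuleCat S) :
    PreservesColimits ((curriedTensor (ModuleCat S)).flip.obj X) :=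
  preservesColimits_of_natIso (F := tensorLeft X)
    (NatIso.ofComponents (fun Y => β_ X Y) (by intros; simp [tensorLeft, tensorRight]))

/-! For a complex `D` with flat terms, `- ⊗ D` is an exact functor on chain complexes. It also
preserves acyclic complexes: the rows `C ⊗ D_j` of the bicomplex `C ⊗ D` are then acyclic, and a
cycle of the total complex is modified by boundaries so as to become zero on one more row at a time,
starting from the highest row that it meets.

A functor with these two properties preserves quasi-isomorphisms. Indeed, by the long exact homology
sequence it sends to quasi-isomorphisms the monomorphisms with acyclic cokernel and the epimorphisms
with acyclic kernel. A quasi-isomorphism `f : C ⟶ C'` is the composite of one of each,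
`C ⟶ E ⊞ C' ⟶ C'`, where `E` is the contractible cone of `𝟙 C`. -/

section Homology

variable {A ι : Type*} [Category* A] {c : ComplexShape ι}

theorem acyclic_mapHomologicalComplex {B : Type*} [Category* B] [HasZeroMorphisms A]
    [HasZeroMorphisms B] (F : A ⥤ B) [F.PreservesZeroMorphisms] [F.PreservesHomology]
    {K : HomologicalComplex A c} (hK : K.Acyclic) :
    ((F.mapHomologicalComplex c).obj K).Acyclic :=
  fun i => (hK i).map F

section Preadditive

variable [Preadditive A]

theorem acyclic_of_homotopy_id_zero {K : HomologicalComplex A c} [∀ n, K.HasHomology n]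
    (h : Homotopy (𝟙 K) 0) : K.Acyclic := fun n => by
  rw [HomologicalComplex.exactAt_iff_isZero_homology, IsZero.iff_id_eq_zero,
    ← HomologicalComplex.homologyMap_id, h.homologyMap_eq, HomologicalComplex.homologyMap_zero]

open HomologicalComplex homotopyCofiber in
theorem acyclic_homotopyCofiber_id [CategoryWithHomology A] [DecidableRel c.Rel]
    (hc : ∀ j, ∃ i, c.Rel i j) (K : HomologicalComplex A c) [HasHomotopyCofiber (𝟙 K)] :
    (homotopyCofiber (𝟙 K)).Acyclic := by
  refine acyclic_of_homotopy_id_zero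
    { hom i j := if h : c.Rel j i then sndX (𝟙 K) i ≫ inlX (𝟙 K) i j h else 0
      zero i j h := dif_neg h
      comm j := ?_ }
  obtain ⟨i, hij⟩ := hc j
  rw [prevD_eq _ hij, dif_pos hij]
  by_cases hj : c.Rel j (c.next j)
  · rw [dNext_eq _ hj, dif_pos hj]
    apply ext_from_X (𝟙 K) _ _ hj
    · simp [d_sndX_assoc _ _ _ hj]
    · simp [inlX_d _ _ _ _ hij hj]
  · rw [dNext_eq_zero _ _ hj]
    apply ext_from_X' (𝟙 K) _ hj
    simp [inlX_d' _ _ _ hij hj]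

theorem mono_homotopyCofiber_inr [DecidableRel c.Rel] {K L : HomologicalComplex A c}
    (φ : K ⟶ L) [HomologicalComplex.HasHomotopyCofiber φ] :
    Mono (HomologicalComplex.homotopyCofiber.inr φ) :=
  HomologicalComplex.mono_of_mono_f _ fun i =>
    mono_of_mono_fac (HomologicalComplex.homotopyCofiber.inrX_sndX φ i)

end Preadditive

variable [Abelian A]

theorem quasiIso_f_of_acyclic_X₃ {S : ShortComplex (HomologicalComplex A c)} (hS : S.ShortExact)
    (h : S.X₃.Acyclic) : QuasiIso S.f := by
  have := hS.mono_f
  have h₃ (i : ι) : IsZero (S.X₃.homology i) := (h i).isZero_homology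
  refine ⟨fun j => (quasiIsoAt_iff_isIso_homologyMap _ _).2 ?_⟩
  have : Epi (HomologicalComplex.homologyMap S.f j) :=
    (hS.homology_exact₂ j).epi_f ((h₃ j).eq_of_tgt _ _)
  have : Mono (HomologicalComplex.homologyMap S.f j) := by
    by_cases! hj : ∃ i, c.Rel i j
    · obtain ⟨i, hij⟩ := hj
      exact (hS.homology_exact₁ i j hij).mono_g ((h₃ i).eq_of_src _ _)
    · exact HomologicalComplex.mono_homologyMap_of_mono_of_not_rel S.f j hj
  exact isIso_of_mono_of_epi _

theorem quasiIso_g_of_acyclic_X₁ {S : ShortComplex (HomologicalComplex A c)} (hS : S.ShortExact)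
    (h : S.X₁.Acyclic) : QuasiIso S.g := by
  have := hS.epi_g
  have h₁ (i : ι) : IsZero (S.X₁.homology i) := (h i).isZero_homology
  refine ⟨fun i => (quasiIsoAt_iff_isIso_homologyMap _ _).2 ?_⟩
  have : Mono (HomologicalComplex.homologyMap S.g i) :=
    (hS.homology_exact₂ i).mono_g ((h₁ i).eq_of_src _ _)
  have : Epi (HomologicalComplex.homologyMap S.g i) := by
    by_cases! hi : ∃ j, c.Rel i j
    · obtain ⟨j, hij⟩ := hi
      exact (hS.homology_exact₃ i j hij).epi_f ((h₁ j).eq_of_tgt _ _)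
    · exact HomologicalComplex.epi_homologyMap_of_epi_of_not_rel S.g i hi
  exact isIso_of_mono_of_epi _

theorem quasiIso_map_of_shortExact_of_acyclic {B κ : Type*} [Category* B] [Abelian B]
    {c' : ComplexShape κ} (hc : ∀ j, ∃ i, c.Rel i j)
    (F : HomologicalComplex A c ⥤ HomologicalComplex B c') [F.PreservesZeroMorphisms]
    (hF : ∀ S : ShortComplex (HomologicalComplex A c), S.ShortExact → (S.map F).ShortExact)
    (hF₀ : ∀ K : HomologicalComplex A c, K.Acyclic → (F.obj K).Acyclic)
    {K L : HomologicalComplex A c} (f : K ⟶ L) [QuasiIso f] : QuasiIso (F.map f) := by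
  classical
  let E := HomologicalComplex.homotopyCofiber (𝟙 K)
  have hE : E.Acyclic := acyclic_homotopyCofiber_id hc K
  let s : K ⟶ E ⊞ L := biprod.lift (HomologicalComplex.homotopyCofiber.inr (𝟙 K)) f
  have hs : s ≫ biprod.snd = f := biprod.lift_snd _ _
  have h₂ : (ShortComplex.mk (biprod.inl : E ⟶ E ⊞ L) biprod.snd (by simp)).ShortExact :=
    (ShortComplex.Splitting.ofHasBinaryBiproduct E L).shortExact
  have : QuasiIso (biprod.snd : E ⊞ L ⟶ L) := quasiIso_g_of_acyclic_X₁ h₂ hE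
  have : QuasiIso (F.map (biprod.snd : E ⊞ L ⟶ L)) :=
    quasiIso_g_of_acyclic_X₁ (hF _ h₂) (hF₀ _ hE)
  have : QuasiIso s := by
    rw [← quasiIso_iff_comp_right s (biprod.snd : E ⊞ L ⟶ L), hs]
    infer_instance
  have := mono_homotopyCofiber_inr (𝟙 K)
  have : Mono s := mono_of_mono_fac (biprod.lift_fst _ _)
  have h₁ : (ShortComplex.mk s (cokernel.π s) (cokernel.condition s)).ShortExact :=
    { exact := ShortComplex.exact_cokernel s }
  have : QuasiIso (F.map s) :=
    quasiIso_f_of_acyclic_X₃ (hF _ h₁) (hF₀ _ (h₁.acyclic_X₃ ‹_›))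
  rw [← hs, F.map_comp]
  infer_instance

end Homology

section TotalComplex

open HomologicalComplex₂

variable {A : Type*} [Category* A]

instance hasTotal_down [Preadditive A] [HasFiniteCoproducts A]
    (K : HomologicalComplex₂ A (.down ℕ) (.down ℕ)) : K.HasTotal (.down ℕ) := fun n => by
  have : Finite ((fun p : ℕ × ℕ => p.1 + p.2) ⁻¹' {n}) :=
    (Finset.HasAntidiagonal.antidiagonal n).finite_toSet.subset fun _ hp =>
      Finset.HasAntidiagonal.mem_antidiagonal.2 hp
  exact hasColimitsOfShape_discrete A ((fun p : ℕ × ℕ => p.1 + p.2) ⁻¹' {n}) |>.has_colimit _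

section Projections

variable [Preadditive A] [HasFiniteCoproducts A]
  (K : HomologicalComplex₂ A (.down ℕ) (.down ℕ))

/-- The projection of the total complex of a first quadrant bicomplex in degree `n` onto the term in
bidegree `(i, j)`. By convention, it vanishes if `i + j ≠ n`. -/
noncomputable def totalProj (i j n : ℕ) : (K.total (.down ℕ)).X n ⟶ (K.X i).X j :=
  K.totalDesc fun i' j' _ =>
    if h : i' = i ∧ j' = j then (K.XXIsoOfEq _ _ _ h.1 h.2).hom else 0

@[simp]
theorem ιTotal_totalProj (i j n : ℕ) (h : i + j = n) :
    K.ιTotal (.down ℕ) i j n h ≫ totalProj K i j n = 𝟙 _ := by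
  simp [totalProj]

theorem ιTotal_totalProj_of_ne {i j i' j' : ℕ} (n : ℕ) (h : i + j = n)
    (hij : ¬(i = i' ∧ j = j')) :
    K.ιTotal (.down ℕ) i j n h ≫ totalProj K i' j' n = 0 := by
  rw [totalProj, ι_totalDesc, dif_neg hij]

theorem totalProj_eq_zero {i j n : ℕ} (h : i + j ≠ n) : totalProj K i j n = 0 := by
  ext i' j' h'
  rw [ιTotal_totalProj_of_ne K n h' (by rintro ⟨rfl, rfl⟩; exact h h'), comp_zero]

theorem sum_totalProj_ιTotal (n : ℕ) :
    ∑ p : Finset.HasAntidiagonal.antidiagonal n, totalProj K p.1.1 p.1.2 n ≫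
      K.ιTotal (.down ℕ) p.1.1 p.1.2 n (Finset.HasAntidiagonal.mem_antidiagonal.1 p.2) = 𝟙 _ := by
  ext i j h
  rw [Preadditive.comp_sum, Category.comp_id,
    Fintype.sum_eq_single ⟨(i, j), Finset.HasAntidiagonal.mem_antidiagonal.2 h⟩, ← Category.assoc,
    ιTotal_totalProj, Category.id_comp]
  rintro ⟨⟨i', j'⟩, _⟩ hne
  rw [← Category.assoc, ιTotal_totalProj_of_ne K n h (by rintro ⟨rfl, rfl⟩; exact hne rfl),
    zero_comp]

variable {K}

theorem total_hom_ext {X : A} {n : ℕ} {f g : X ⟶ (K.total (.down ℕ)).X n}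
    (h : ∀ i j, i + j = n → f ≫ totalProj K i j n = g ≫ totalProj K i j n) : f = g := by
  rw [← Category.comp_id f, ← Category.comp_id g, ← sum_totalProj_ιTotal, Preadditive.comp_sum,
    Preadditive.comp_sum]
  refine Finset.sum_congr rfl fun p _ => ?_
  rw [← Category.assoc, h p.1.1 p.1.2 (Finset.HasAntidiagonal.mem_antidiagonal.1 p.2),
    Category.assoc]

theorem total_map_totalProj {L : HomologicalComplex₂ A (.down ℕ) (.down ℕ)} (φ : K ⟶ L)
    (i j n : ℕ) :
    (total.map φ (.down ℕ)).f n ≫ totalProj L i j n = totalProj K i j n ≫ (φ.f i).f j := by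
  ext i' j' h
  rw [ιTotal_map_assoc, ← Category.assoc (K.ιTotal _ _ _ _ _)]
  by_cases hij : i' = i ∧ j' = j
  · obtain ⟨rfl, rfl⟩ := hij
    simp
  · rw [ιTotal_totalProj_of_ne L n h hij, ιTotal_totalProj_of_ne K n h hij, comp_zero, zero_comp]

variable (K)

theorem D₁_totalProj (i j n : ℕ) :
    K.D₁ (.down ℕ) (n + 1) n ≫ totalProj K i j n =
      totalProj K (i + 1) j (n + 1) ≫ (K.d (i + 1) i).f j := by
  refine total.hom_ext (K := K) _ fun i' j' h => ?_
  rw [ι_D₁_assoc, ← Category.assoc]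
  obtain _ | i' := i'
  · rw [d₁_eq_zero _ _ _ _ _ (by simp), zero_comp,
      ιTotal_totalProj_of_ne K _ h (by simp), zero_comp]
  · rw [d₁_eq K (.down ℕ) (ComplexShape.down_mk (i' + 1) i' rfl) j' n (by simp at h ⊢; omega)]
    by_cases hij : i' = i ∧ j' = j
    · obtain ⟨rfl, rfl⟩ := hij
      simp
    · rw [Linear.units_smul_comp, Category.assoc, ιTotal_totalProj_of_ne K _ _ hij, comp_zero,
        smul_zero, ιTotal_totalProj_of_ne K _ h (by simpa using hij), zero_comp]

theorem D₂_totalProj (i j n : ℕ) :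
    K.D₂ (.down ℕ) (n + 1) n ≫ totalProj K i j n =
      (ComplexShape.down ℕ).ε i • totalProj K i (j + 1) (n + 1) ≫ (K.X i).d (j + 1) j := by
  refine total.hom_ext (K := K) _ fun i' j' h => ?_
  rw [ι_D₂_assoc, Linear.comp_units_smul, ← Category.assoc]
  obtain _ | j' := j'
  · rw [d₂_eq_zero _ _ _ _ _ (by simp), zero_comp,
      ιTotal_totalProj_of_ne K _ h (by simp), zero_comp, smul_zero]
  · rw [d₂_eq K (.down ℕ) i' (ComplexShape.down_mk (j' + 1) j' rfl) n (by simp at h ⊢; omega)]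
    by_cases hij : i' = i ∧ j' = j
    · obtain ⟨rfl, rfl⟩ := hij
      simp
    · rw [Linear.units_smul_comp, Category.assoc, ιTotal_totalProj_of_ne K _ _ hij, comp_zero,
        ιTotal_totalProj_of_ne K _ h (by simpa using hij), zero_comp, smul_zero, smul_zero]

theorem total_d_totalProj (i j n : ℕ) :
    (K.total (.down ℕ)).d (n + 1) n ≫ totalProj K i j n =
      totalProj K (i + 1) j (n + 1) ≫ (K.d (i + 1) i).f j +
        (ComplexShape.down ℕ).ε i • totalProj K i (j + 1) (n + 1) ≫ (K.X i).d (j + 1) j := by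
  rw [← D₁_totalProj, ← D₂_totalProj, ← Preadditive.add_comp, total_d]

end Projections

section Acyclic

theorem exactAt_iff_exact_up_to_refinements_of_rel [Abelian A] {ι : Type*} {c : ComplexShape ι}
    (K : HomologicalComplex A c) {i j : ι} (hij : c.Rel i j) :
    K.ExactAt j ↔ ∀ ⦃X : A⦄ (x : X ⟶ K.X j), (∀ k, x ≫ K.d j k = 0) →
      ∃ (X' : A) (p : X' ⟶ X) (_ : Epi p) (y : X' ⟶ K.X i), p ≫ x = y ≫ K.d i j := by
  rw [K.exactAt_iff_exact_up_to_refinements i j _ (c.prev_eq' hij) rfl]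
  refine forall₂_congr fun X x => imp_congr_left ⟨fun hx k => ?_, fun hx => hx _⟩
  by_cases hjk : c.Rel j k
  · rwa [← c.next_eq' hjk]
  · rw [K.shape _ _ hjk, comp_zero]

/-- A generalized element `x` of the total complex of `K` in degree `n` belongs to the `k`th step of
the filtration by rows if its components in bidegrees `(i, j)` with `k ≤ j` vanish. -/
def VanishesFromRow [Preadditive A] [HasFiniteCoproducts A]
    (K : HomologicalComplex₂ A (.down ℕ) (.down ℕ)) (k : ℕ) {X : A} {n : ℕ}
    (x : X ⟶ (K.total (.down ℕ)).X n) : Prop :=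
  ∀ i j, k ≤ j → x ≫ totalProj K i j n = 0

variable [Abelian A] {K : HomologicalComplex₂ A (.down ℕ) (.down ℕ)}

theorem VanishesFromRow.comp_totalProj_comp_d {k n i : ℕ} {X : A}
    {x : X ⟶ (K.total (.down ℕ)).X n} (hx : VanishesFromRow K (k + 1) x)
    (hd : ∀ m, x ≫ (K.total (.down ℕ)).d n m = 0) (hn : i + k = n) (i' : ℕ) :
    (x ≫ totalProj K i k n) ≫ (K.flip.X k).d i i' = 0 := by
  by_cases hi : (ComplexShape.down ℕ).Rel i i'
  · obtain rfl : i' + 1 = i := hi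
    obtain rfl : (i' + k) + 1 = n := by omega
    have := x ≫= total_d_totalProj K i' k (i' + k)
    rw [← Category.assoc, hd, zero_comp, Preadditive.comp_add, Linear.comp_units_smul,
      ← Category.assoc x, ← Category.assoc x, hx _ _ le_rfl, zero_comp, smul_zero, add_zero] at this
    exact this.symm
  · rw [HomologicalComplex.shape _ _ _ hi]
    exact comp_zero

theorem VanishesFromRow.exists_sub_boundary {k n : ℕ} {X : A}
    {x : X ⟶ (K.total (.down ℕ)).X n} (hx : VanishesFromRow K (k + 1) x)
    (hK : (K.flip.X k).Acyclic) (hd : ∀ m, x ≫ (K.total (.down ℕ)).d n m = 0) :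
    ∃ (X' : A) (p : X' ⟶ X) (_ : Epi p) (y : X' ⟶ (K.total (.down ℕ)).X (n + 1)),
      VanishesFromRow K k (p ≫ x - y ≫ (K.total (.down ℕ)).d (n + 1) n) := by
  obtain hkn | ⟨i, rfl⟩ := lt_or_ge n k |>.imp_right Nat.exists_eq_add_of_le'
  · refine ⟨X, 𝟙 X, inferInstance, 0, fun i j hj => ?_⟩
    rw [totalProj_eq_zero K (by omega), comp_zero]
  obtain ⟨X', p, hp, (b : X' ⟶ (K.X (i + 1)).X k),
    (hb : p ≫ x ≫ totalProj K i k _ = b ≫ (K.d (i + 1) i).f k)⟩ :=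
    (exactAt_iff_exact_up_to_refinements_of_rel _ (ComplexShape.down_mk (i + 1) i rfl)).1 (hK i)
      _ (hx.comp_totalProj_comp_d hd rfl)
  refine ⟨X', p, hp, b ≫ K.ιTotal (.down ℕ) (i + 1) k _ (by simp; omega), fun i' j' hj => ?_⟩
  by_cases! hn : i' + j' ≠ i + k
  · rw [totalProj_eq_zero K hn, comp_zero]
  have hy : K.ιTotal (.down ℕ) (i + 1) k (i + k + 1) (by simp; omega) ≫
      (K.total (.down ℕ)).d (i + k + 1) (i + k) ≫ totalProj K i' j' (i + k) =
      (K.ιTotal (.down ℕ) (i + 1) k (i + k + 1) (by simp; omega) ≫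
        totalProj K (i' + 1) j' (i + k + 1)) ≫ (K.d (i' + 1) i').f j' := by
    rw [total_d_totalProj, Preadditive.comp_add, Linear.comp_units_smul, ← Category.assoc,
      ← Category.assoc, ιTotal_totalProj_of_ne K (i' := i') _ _ (by omega), zero_comp, smul_zero,
      add_zero]
  rw [Preadditive.sub_comp, sub_eq_zero, Category.assoc, Category.assoc, Category.assoc, hy]
  obtain rfl | hj := hj.eq_or_lt
  · obtain rfl : i' = i := by omega
    rw [ιTotal_totalProj, Category.id_comp, hb]
  · rw [hx i' j' hj, ιTotal_totalProj_of_ne K _ _ (by omega), zero_comp, comp_zero, comp_zero]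

theorem acyclic_total (hK : ∀ j, (K.flip.X j).Acyclic) : (K.total (.down ℕ)).Acyclic := by
  intro n
  rw [exactAt_iff_exact_up_to_refinements_of_rel _ (ComplexShape.down_mk (n + 1) n rfl)]
  have key (k : ℕ) : ∀ ⦃X : A⦄ (x : X ⟶ (K.total (.down ℕ)).X n), VanishesFromRow K k x →
      (∀ m, x ≫ (K.total (.down ℕ)).d n m = 0) →
      ∃ (X' : A) (p : X' ⟶ X) (_ : Epi p) (y : X' ⟶ (K.total (.down ℕ)).X (n + 1)),
        p ≫ x = y ≫ (K.total (.down ℕ)).d (n + 1) n := by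
    induction k with
    | zero =>
      intro X x hx _
      obtain rfl : x = 0 := total_hom_ext fun i j _ => by rw [hx i j j.zero_le, zero_comp]
      exact ⟨X, 𝟙 X, inferInstance, 0, by simp⟩
    | succ k ih =>
      intro X x hx hd
      obtain ⟨X', p, _, y, hy⟩ := hx.exists_sub_boundary (hK k) hd
      obtain ⟨X'', q, _, z, hz⟩ := ih _ hy fun m => by simp [hd]
      refine ⟨X'', q ≫ p, inferInstance, z + q ≫ y, ?_⟩
      rw [Preadditive.add_comp, ← hz]
      simp
  refine fun X x hd => key (n + 1) x (fun i j hj => ?_) hd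
  rw [totalProj_eq_zero K (by omega), comp_zero]

end Acyclic

section ShortExact

theorem total_map_zero [Preadditive A] [HasFiniteCoproducts A]
    (K L : HomologicalComplex₂ A (.down ℕ) (.down ℕ)) :
    total.map (0 : K ⟶ L) (.down ℕ) = 0 := by
  ext n : 1
  refine total.hom_ext _ fun i j h => ?_
  rw [ιTotal_map]
  exact zero_comp.trans comp_zero.symm

instance preservesZeroMorphisms_totalFunctor [Preadditive A] [HasFiniteCoproducts A] :
    (totalFunctor A (.down ℕ) (.down ℕ) (.down ℕ)).PreservesZeroMorphisms where
  map_zero := total_map_zero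

variable [Abelian A]

theorem shortExact_bidegree {S : ShortComplex (HomologicalComplex₂ A (.down ℕ) (.down ℕ))}
    (hS : S.ShortExact) (i j : ℕ) :
    (ShortComplex.mk ((S.f.f i).f j) ((S.g.f i).f j) (by
      rw [← HomologicalComplex.comp_f, ← HomologicalComplex.comp_f, S.zero]; rfl)).ShortExact :=
  (hS.map_of_exact (HomologicalComplex.eval _ _ i)).map_of_exact (HomologicalComplex.eval _ _ j)

theorem shortExact_map_totalFunctor {S : ShortComplex (HomologicalComplex₂ A (.down ℕ) (.down ℕ))}
    (hS : S.ShortExact) :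
    (S.map (totalFunctor A (.down ℕ) (.down ℕ) (.down ℕ))).ShortExact := by
  refine HomologicalComplex.shortExact_of_degreewise_shortExact _ fun n => ?_
  have (i j : ℕ) : Mono ((S.f.f i).f j) := (shortExact_bidegree hS i j).mono_f
  have (i j : ℕ) : Epi ((S.g.f i).f j) := (shortExact_bidegree hS i j).epi_g
  have hf : Mono ((total.map S.f (.down ℕ)).f n) := by
    refine ⟨fun x y hxy => total_hom_ext fun i j _ => ?_⟩
    rw [← cancel_mono ((S.f.f i).f j), Category.assoc, Category.assoc, ← total_map_totalProj,
      ← Category.assoc, hxy, Category.assoc]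
  have hg : Epi ((total.map S.g (.down ℕ)).f n) := by
    refine ⟨fun x y hxy => total.hom_ext _ fun i j h => ?_⟩
    rw [← cancel_epi ((S.g.f i).f j), ← ιTotal_map_assoc, hxy, ιTotal_map_assoc]
  have w : (total.map S.f (.down ℕ)).f n ≫ (total.map S.g (.down ℕ)).f n = 0 := by
    rw [← HomologicalComplex.comp_f, ← total.map_comp, S.zero, total_map_zero]
    rfl
  have hw : IsColimit (CokernelCofork.ofπ _ w) :=
    CokernelCofork.IsColimit.ofπ' _ _ fun {W} k hk =>
      have hk' (i j : ℕ) (h : i + j = n) :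
          (S.f.f i).f j ≫ S.X₂.ιTotal (.down ℕ) i j n h ≫ k = 0 := by
        rw [← ιTotal_map_assoc, hk, comp_zero]
      ⟨S.X₃.totalDesc fun i j h => (shortExact_bidegree hS i j).exact.desc _ (hk' i j h),
        total.hom_ext _ fun i j h => by
          rw [ιTotal_map_assoc, ι_totalDesc]
          exact (shortExact_bidegree hS i j).exact.g_desc _ (hk' i j h)⟩
  exact { exact := ShortComplex.exact_of_g_is_cokernel _ hw, mono_f := hf, epi_g := hg }

end ShortExact

end TotalComplex

section Bifunctor

variable {A B C : Type*} [Category* A] [Abelian A] [Category* B] [HasZeroMorphisms B]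
  [Category* C] [Abelian C] (F : A ⥤ B ⥤ C) [F.PreservesZeroMorphisms]
  [∀ X, (F.obj X).PreservesZeroMorphisms] (D : HomologicalComplex B (.down ℕ))

instance preservesZeroMorphisms_mapBifunctorHomologicalComplex_flip_obj :
    ((F.mapBifunctorHomologicalComplex (.down ℕ) (.down ℕ)).flip.obj D).PreservesZeroMorphisms where
  map_zero K L := by
    ext i j
    exact (F.flip.obj (D.X j)).map_zero _ _

variable [∀ j, PreservesFiniteLimits (F.flip.obj (D.X j))]
  [∀ j, PreservesFiniteColimits (F.flip.obj (D.X j))]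

theorem shortExact_map_mapBifunctorHomologicalComplex_flip_obj
    {S : ShortComplex (HomologicalComplex A (.down ℕ))} (hS : S.ShortExact) :
    (S.map ((F.mapBifunctorHomologicalComplex (.down ℕ) (.down ℕ)).flip.obj D)).ShortExact :=
  HomologicalComplex.shortExact_of_degreewise_shortExact _ fun i =>
    HomologicalComplex.shortExact_of_degreewise_shortExact _ fun j =>
      (hS.map_of_exact (HomologicalComplex.eval _ _ i)).map_of_exact (F.flip.obj (D.X j))

theorem acyclic_mapBifunctor {K : HomologicalComplex A (.down ℕ)} (hK : K.Acyclic) :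
    (HomologicalComplex.mapBifunctor K D F (.down ℕ)).Acyclic :=
  acyclic_total fun j => acyclic_mapHomologicalComplex (F.flip.obj (D.X j)) hK

theorem quasiIso_mapBifunctorMap_id {K L : HomologicalComplex A (.down ℕ)} (f : K ⟶ L)
    [QuasiIso f] : QuasiIso (HomologicalComplex.mapBifunctorMap f (𝟙 D) F (.down ℕ)) := by
  have := quasiIso_map_of_shortExact_of_acyclic (fun j => ⟨j + 1, rfl⟩)
    ((F.mapBifunctorHomologicalComplex (.down ℕ) (.down ℕ)).flip.obj D ⋙
      HomologicalComplex₂.totalFunctor C (.down ℕ) (.down ℕ) (.down ℕ))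
    (fun S hS => shortExact_map_totalFunctor
      (shortExact_map_mapBifunctorHomologicalComplex_flip_obj F D hS))
    (fun K hK => acyclic_mapBifunctor F D hK) f
  rw [HomologicalComplex.mapBifunctorMap, CategoryTheory.Functor.map_id, Category.comp_id]
  exact this

end Bifunctor

theorem quasiIso_tensor_id_of_projective_of_bounded_general (S : Type) [CommRing S]
    (C C' D : ChainComplex (ModuleCat S) ℕ) (f : C ⟶ C') (hf : QuasiIso f)
    (hflat : ∀ n, Module.Flat S (D.X n)) : QuasiIso (MonoidalCategory.tensorHom f (𝟙 D)) := by
  have (n : ℕ) : PreservesFiniteLimits ((curriedTensor (ModuleCat S)).flip.obj (D.X n)) :=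
    inferInstanceAs (PreservesFiniteLimits (tensorRight (D.X n)))
  exact quasiIso_mapBifunctorMap_id (curriedTensor (ModuleCat S)) D f

/-- If `f : C ⟶ C'` is a quasi-isomorphism of non-negatively graded chain complexes of
`S`-modules and `D` is a bounded chain complex of projective `S`-modules, then
`f ⊗ 𝟙 D` (the induced map on total complexes of the tensor products) is a
quasi-isomorphism. -/
theorem quasiIso_tensor_id_of_projective_of_bounded
    (S : Type) [CommRing S]
    (C C' D : ChainComplex (ModuleCat S) ℕ) (f : C ⟶ C')
    (hf : QuasiIso f)
    (hproj : ∀ n : ℕ, Module.Projective S (D.X n))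
    (N : ℕ) (hbound : ∀ n : ℕ, N < n → IsZero (D.X n)) :
    QuasiIso (MonoidalCategory.tensorHom f (𝟙 D)) :=
  quasiIso_tensor_id_of_projective_of_bounded_general S C C' D f hf fun _ => inferInstance
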